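/- Let E be a real inner product space, d a positive integer, C > 0, τ > 0 with d·τ² > 1, and M : Fin d → E with ‖M i‖² ≤ C for all i and |⟪M i, M j⟫| ≤ C/d for all i ≠ j. Let O : Fin k → E be any finite sequence of queries with ‖O l‖² ≤ C for every l. If (k : ℝ)·(2·d/(d·τ² − 1)) ≤ d − 2, then there exist distinct indices i ≠ j in Fin d such that for every l : Fin k, both |⟪O l, M i⟫| ≤ C·τ and |⟪O l, M j⟫| ≤ C·τ. -/

import Mathlib

/-!
If `B` is a set of hypotheses whose correlation with a single query `o` exceeds `C τ` in absolute
value, put `v = ∑ i ∈ B, sᵢ Mᵢ` with `sᵢ` the sign of `⟪o, Mᵢ⟫`. Then `|B| C τ ≤ ⟪o, v⟫`, whereas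
near-orthogonality of the family gives `‖v‖² ≤ |B| C + |B|² C / d`. Cauchy–Schwarz yields
`|B| (d τ² - 1) ≤ d`, so each query eliminates at most `d / (d τ² - 1)` hypotheses
(`card_mul_le_of_large_corr`). A union bound over the `k` queries leaves at least two survivors.
-/

open scoped RealInnerProductSpace

/-- A sum over `B` of nearly orthogonal vectors with coefficients in `[-1, 1]` has squared norm at
most the diagonal contribution `|B| C` plus `C / d` for each of the `|B|²` pairs. -/
lemma norm_sq_signed_sum_le {E ι : Type*} [NormedAddCommGroup E] [InnerProductSpace ℝ E]
    (d : ℕ) (C : ℝ) (hC : 0 < C) (M : ι → E)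
    (hnorm : ∀ i, ‖M i‖ ^ 2 ≤ C)
    (hcorr : ∀ i j, i ≠ j → |⟪M i, M j⟫| ≤ C / d)
    (s : ι → ℝ) (hs : ∀ i, |s i| ≤ 1) (B : Finset ι) :
    ‖∑ i ∈ B, s i • M i‖ ^ 2 ≤ B.card * C + (B.card : ℝ) ^ 2 * (C / d) := by
  classical
  have hterm : ∀ i j, ⟪s i • M i, s j • M j⟫ ≤ (if i = j then C else 0) + C / d := by
    intro i j
    have habs : |⟪M i, M j⟫| ≤ (if i = j then C else 0) + C / d := by
      have hCd : 0 ≤ C / d := by positivity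
      split_ifs with h
      · subst h
        rw [real_inner_self_eq_norm_sq, abs_of_nonneg (by positivity)]
        linarith [hnorm i]
      · simpa using hcorr i j h
    calc ⟪s i • M i, s j • M j⟫ ≤ |⟪s i • M i, s j • M j⟫| := le_abs_self _
      _ = (|s i| * |s j|) * |⟪M i, M j⟫| := by
        rw [real_inner_smul_left, real_inner_smul_right, abs_mul, abs_mul, mul_assoc]
      _ ≤ 1 * |⟪M i, M j⟫| := by
        gcongr
        exact mul_le_one₀ (hs i) (abs_nonneg _) (hs j)
      _ ≤ _ := by rw [one_mul]; exact habs
  rw [← real_inner_self_eq_norm_sq, sum_inner]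
  simp_rw [inner_sum]
  calc ∑ i ∈ B, ∑ j ∈ B, ⟪s i • M i, s j • M j⟫
      ≤ ∑ i ∈ B, ∑ j ∈ B, ((if i = j then C else 0) + C / d) :=
        Finset.sum_le_sum fun i _ => Finset.sum_le_sum fun j _ => hterm i j
    _ = B.card * C + (B.card : ℝ) ^ 2 * (C / d) := by
      simp [Finset.sum_add_distrib]
      ring

/-- When `d τ² > 1`, this says that one query `o` has correlation above the tolerance with at most
`d / (d τ² - 1)` members of a nearly orthogonal family. -/
lemma card_mul_le_of_large_corr {E ι : Type*} [NormedAddCommGroup E] [InnerProductSpace ℝ E]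
    (d : ℕ) (hd : 0 < d) (C τ : ℝ) (hC : 0 < C) (hτ : 0 < τ) (M : ι → E)
    (hnorm : ∀ i, ‖M i‖ ^ 2 ≤ C)
    (hcorr : ∀ i j, i ≠ j → |⟪M i, M j⟫| ≤ C / d)
    (o : E) (ho : ‖o‖ ^ 2 ≤ C) (B : Finset ι) (hB : ∀ i ∈ B, C * τ < |⟪o, M i⟫|) :
    (B.card : ℝ) * (d * τ ^ 2 - 1) ≤ d := by
  obtain hb | hb := Nat.eq_zero_or_pos B.card
  · simp [hb]
  have hd' : (0 : ℝ) < d := by exact_mod_cast hd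
  have hb' : (0 : ℝ) < B.card := by exact_mod_cast hb
  let s : ι → ℝ := fun i => if 0 ≤ ⟪o, M i⟫ then 1 else -1
  have hs : ∀ i, |s i| ≤ 1 := by
    intro i
    simp only [s]
    split_ifs <;> simp
  have hmul : ∀ i, s i * ⟪o, M i⟫ = |⟪o, M i⟫| := by
    intro i
    simp only [s]
    split_ifs with h
    · rw [abs_of_nonneg h, one_mul]
    · rw [abs_of_neg (not_le.mp h), neg_one_mul]
  set v := ∑ i ∈ B, s i • M i with hv
  have hlow : B.card * (C * τ) ≤ ⟪o, v⟫ := by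
    rw [hv, inner_sum, ← nsmul_eq_mul]
    refine Finset.card_nsmul_le_sum _ _ _ fun i hi => ?_
    rw [real_inner_smul_right, hmul]
    exact (hB i hi).le
  have hv2 : ‖v‖ ^ 2 ≤ B.card * C + (B.card : ℝ) ^ 2 * (C / d) :=
    norm_sq_signed_sum_le d C hC M hnorm hcorr s hs B
  have hsq : (B.card * (C * τ)) ^ 2 ≤ C * (B.card * C + (B.card : ℝ) ^ 2 * (C / d)) :=
    calc (B.card * (C * τ)) ^ 2 ≤ (‖o‖ * ‖v‖) ^ 2 :=
          pow_le_pow_left₀ (by positivity) (hlow.trans (real_inner_le_norm o v)) 2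
      _ = ‖o‖ ^ 2 * ‖v‖ ^ 2 := by ring
      _ ≤ _ := by gcongr
  -- Both sides of `hsq` carry the common factor `|B| C² / d`.
  have hfac : 0 < B.card * C ^ 2 / d := by positivity
  refine le_of_mul_le_mul_left ?_ hfac
  have e₁ : B.card * C ^ 2 / d * (B.card * (d * τ ^ 2 - 1))
      = (B.card * (C * τ)) ^ 2 - C * ((B.card : ℝ) ^ 2 * (C / d)) := by
    field_simp
  have e₂ : B.card * C ^ 2 / d * d = C * (B.card * C) := by
    field_simp
  rw [e₁, e₂]
  linarith

/-- Combinatorial core of the statistical query lower bound: if `M : Fin d → E` is a family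
of hypotheses with `‖M i‖² ≤ C` and pairwise correlations `|⟪M i, M j⟫| ≤ C / d`, and
`O : Fin k → E` is a sequence of queries with `‖O l‖² ≤ C`, then as long as
`k · (2d / (dτ² − 1)) ≤ d − 2`, two distinct hypotheses remain whose correlations with
every query lie within the tolerance `C·τ`. -/
theorem sq_lower_bound_two_survivors
    {E : Type*} [NormedAddCommGroup E] [InnerProductSpace ℝ E]
    (d : ℕ) (hd : 0 < d) (C τ : ℝ) (hC : 0 < C) (hτ : 0 < τ)
    (hdτ : 1 < (d : ℝ) * τ ^ 2)
    (M : Fin d → E)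
    (hnorm : ∀ i : Fin d, ‖M i‖ ^ 2 ≤ C)
    (hcorr : ∀ i j : Fin d, i ≠ j → |⟪M i, M j⟫| ≤ C / d)
    (k : ℕ) (O : Fin k → E) (hO : ∀ l : Fin k, ‖O l‖ ^ 2 ≤ C)
    (hk : (k : ℝ) * (2 * (d : ℝ) / ((d : ℝ) * τ ^ 2 - 1)) ≤ (d : ℝ) - 2) :
    ∃ i j : Fin d, i ≠ j ∧
      ∀ l : Fin k, |⟪O l, M i⟫| ≤ C * τ ∧ |⟪O l, M j⟫| ≤ C * τ := by
  classical
  have hpos : 0 < (d : ℝ) * τ ^ 2 - 1 := by linarith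
  let bad : Fin k → Finset (Fin d) := fun l => Finset.univ.filter fun i => C * τ < |⟪O l, M i⟫|
  have hbad : ∀ l, ((bad l).card : ℝ) ≤ 2 * d / (d * τ ^ 2 - 1) := by
    intro l
    rw [le_div_iff₀ hpos]
    have h := card_mul_le_of_large_corr d hd C τ hC hτ M hnorm hcorr (O l) (hO l) (bad l)
      (by simp [bad])
    have hd' : (0 : ℝ) ≤ d := by positivity
    linarith
  let U := Finset.univ.biUnion bad
  have hU : (U.card : ℝ) ≤ d - 2 := by
    calc (U.card : ℝ) ≤ ∑ l, ((bad l).card : ℝ) := by exact_mod_cast Finset.card_biUnion_le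
      _ ≤ ∑ _l : Fin k, 2 * (d : ℝ) / (d * τ ^ 2 - 1) := Finset.sum_le_sum fun l _ => hbad l
      _ = k * (2 * d / (d * τ ^ 2 - 1)) := by simp
      _ ≤ d - 2 := hk
  have hU' : U.card + 2 ≤ d := by
    have : (U.card : ℝ) + 2 ≤ d := by linarith
    exact_mod_cast this
  have hcard : 1 < Uᶜ.card := by
    rw [Finset.card_compl, Fintype.card_fin]
    omega
  obtain ⟨i, hi, j, hj, hij⟩ := Finset.one_lt_card.mp hcard
  have hgood : ∀ i ∈ Uᶜ, ∀ l, |⟪O l, M i⟫| ≤ C * τ := by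
    intro i hi l
    by_contra! h
    exact Finset.mem_compl.mp hi (Finset.mem_biUnion.mpr ⟨l, Finset.mem_univ _, by simp [bad, h]⟩)
  exact ⟨i, j, hij, fun l => ⟨hgood i hi l, hgood j hj l⟩⟩
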